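/- Let τ: Ω → Ω' be an isometry of Hilbert geometries and let r₁, r₂ be rigid rays in Ω such that a(r₁) and a(r₂) are contained in the relative interior of the same face of the closure of Ω. Then a(τ(r₁)) and a(τ(r₂)) lie in the relative interior of the same face of the closure of Ω'. -/

import Mathlib

/-!
The proof compares boundary points through the following criterion: if sequences `x k → a`
and `y k → b` in a convex domain stay at bounded Hilbert distance, then `a` and `b` are
relatively interior to the same face of the closure.  A bound `C` on the distance of `x` and
`y` means that the segment `[x, y]` can be prolonged at both ends by the factor `exp (-C)`
inside the closure (`prolong_mem_closure`).  This condition is closed, so it passes to the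
limits `a, b`, and then the smallest face `faceAt K a` of the closure `K` at `a` coincides
with the one at `b` and has both points in its relative interior (`exists_common_face`).

Conversely, rays `r₁, r₂` ending in the relative interior of one face stay at bounded distance
from one another: every `x ∈ r₁` has a partner `y ∈ r₂` at distance at most `C`
(`exists_dist_bound`).  Choose `x k ∈ r₁` with `τ (x k) → a₁'` and partners `y k ∈ r₂`; by
compactness `τ (y k)` may be taken to converge to some `b`.  Since `τ` preserves distances,
the criterion puts `a₁'` and `b` in the relative interior of one face, and `b` lies on the
boundary because `a₁'` does.

It remains to see that `b = a₂'`, and here rigidity enters.  An isometry sends a rigid segment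
into the straight segment between the images of its ends (`map_mem_segment_of_rigid`), so the
image of the rigid ray `r₂` lies on a straight ray and has only one accumulation point on the
boundary (`bdryLimit_image_unique`).

All distance computations take place on a single chord with parameter interval `(a, b)`, where
`t ↦ log (t - a) - log (b - t)` is an isometric coordinate (`hilbertDist_chord`).
-/

open Set
open scoped LinearAlgebra.Projectivization
open scoped Classical

noncomputable section

abbrev Euc (n : ℕ) := EuclideanSpace ℝ (Fin n)

/-- `α` and `β` are the two points where the straight line through `x` and `y`
meets the boundary of `Ω`, labeled so that `|α−x| < |α−y|` and `|β−y| < |β−x|`. -/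
def IsHilbertPair {n : ℕ} (Ω : Set (Euc n)) (x y α β : Euc n) : Prop :=
  α ∈ frontier Ω ∧ β ∈ frontier Ω ∧
    Collinear ℝ ({α, x, y} : Set (Euc n)) ∧ Collinear ℝ ({β, x, y} : Set (Euc n)) ∧
    dist α x < dist α y ∧ dist β y < dist β x

/-- The Hilbert metric of `Ω`: `d_Ω(x,y) = ln((|α−y|/|α−x|)·(|β−x|/|β−y|))` for `x ≠ y`
(where `α, β` are as in `IsHilbertPair`; for `x ≠ y` in a convex domain `Ω` such a pair
exists and is unique), and `d_Ω(x,x) = 0` (no such pair exists when `x = y`). -/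
def hilbertDist {n : ℕ} (Ω : Set (Euc n)) (x y : Euc n) : ℝ :=
  if h : ∃ p : Euc n × Euc n, IsHilbertPair Ω x y p.1 p.2 then
    Real.log ((dist h.choose.1 y / dist h.choose.1 x) * (dist h.choose.2 x / dist h.choose.2 y))
  else 0

/-- An isometry of Hilbert geometries: a surjective distance preserving map. -/
def IsHilbertIsometry {n : ℕ} (Ω Ω' : Set (Euc n)) (τ : Euc n → Euc n) : Prop :=
  Set.MapsTo τ Ω Ω' ∧ Set.SurjOn τ Ω Ω' ∧
    ∀ x ∈ Ω, ∀ y ∈ Ω, hilbertDist Ω' (τ x) (τ y) = hilbertDist Ω x y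

/-- The standard affine chart `ℝⁿ → ℝPⁿ`, `x ↦ [x : 1]`. -/
def chart {n : ℕ} (x : Euc n) : Projectivization ℝ (Fin (n + 1) → ℝ) :=
  Projectivization.mk ℝ ((Fin.snoc (fun i => x i) 1 : Fin (n + 1) → ℝ))
    (fun h => one_ne_zero (α := ℝ) (by simpa using congrFun h (Fin.last n)))

/-- The projective transformation of `ℝPⁿ` induced by an element of `GL_{n+1}(ℝ)`
(every element of `PGL_{n+1}(ℝ)` arises this way). -/
def projMap {n : ℕ} (g : (Fin (n + 1) → ℝ) ≃ₗ[ℝ] (Fin (n + 1) → ℝ)) :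
    Projectivization ℝ (Fin (n + 1) → ℝ) → Projectivization ℝ (Fin (n + 1) → ℝ) :=
  Projectivization.map (g : (Fin (n + 1) → ℝ) →ₗ[ℝ] (Fin (n + 1) → ℝ)) g.injective

/-- `τ` agrees on `Ω` with (the restriction of) a projective transformation of `ℝPⁿ`. -/
def IsProjectiveOn {n : ℕ} (Ω : Set (Euc n)) (τ : Euc n → Euc n) : Prop :=
  ∃ g : (Fin (n + 1) → ℝ) ≃ₗ[ℝ] (Fin (n + 1) → ℝ),
    ∀ x ∈ Ω, chart (τ x) = projMap g (chart x)

/-- A ray in `Ω`: the intersection with `Ω` of a Euclidean ray starting at a point of `Ω`. -/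
def IsRayIn {n : ℕ} (Ω r : Set (Euc n)) : Prop :=
  ∃ p ∈ Ω, ∃ d : Euc n, d ≠ 0 ∧ r = {x | ∃ t : ℝ, 0 ≤ t ∧ x = p + t • d} ∩ Ω

/-- A line in `Ω`: the nonempty intersection of a straight line with `Ω`. -/
def IsLineIn {n : ℕ} (Ω L : Set (Euc n)) : Prop :=
  L.Nonempty ∧ ∃ p d : Euc n, d ≠ 0 ∧ L = {x | ∃ t : ℝ, x = p + t • d} ∩ Ω

/-- `a` is an accumulation point of the set `s ⊆ Ω` on the boundary of `Ω`.
For a ray `r` in a convex domain `Ω` there is exactly one such point, denoted `a(r)`. -/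
def IsBdryLimit {n : ℕ} (Ω s : Set (Euc n)) (a : Euc n) : Prop :=
  a ∈ frontier Ω ∧ a ∈ closure s

/-- `e` is a focusing point of the isometry `τ : Ω → Ω'`: an extreme point of the closure
of `Ω` such that for any two rays `r₁, r₂` in `Ω` with `a(r₁) = a(r₂) = e` one has
`a(τ(r₁)) = a(τ(r₂))`. -/
def IsFocusingPoint {n : ℕ} (Ω Ω' : Set (Euc n)) (τ : Euc n → Euc n) (e : Euc n) : Prop :=
  e ∈ Set.extremePoints ℝ (closure Ω) ∧
    ∀ r₁ r₂ : Set (Euc n), IsRayIn Ω r₁ → IsRayIn Ω r₂ →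
      IsBdryLimit Ω r₁ e → IsBdryLimit Ω r₂ e →
      ∀ a₁ a₂ : Euc n, IsBdryLimit Ω' (τ '' r₁) a₁ → IsBdryLimit Ω' (τ '' r₂) a₂ → a₁ = a₂

/-- An extreme line in `Ω`: a line in `Ω` whose closure meets `∂Ω` in extreme points
of the closure of `Ω`. -/
def IsExtremeLine {n : ℕ} (Ω L : Set (Euc n)) : Prop :=
  IsLineIn Ω L ∧ ∀ x ∈ closure L ∩ frontier Ω, x ∈ Set.extremePoints ℝ (closure Ω)

/-- `s` is rigid in `Ω`: for any two points `a, b` of `s` the segment `[a,b]` is the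
unique geodesic from `a` to `b` in `(Ω, d_Ω)`, i.e. every point `z` with
`d(a,z) + d(z,b) = d(a,b)` lies on the segment `[a,b]`. -/
def IsRigidSet {n : ℕ} (Ω s : Set (Euc n)) : Prop :=
  ∀ a ∈ s, ∀ b ∈ s, ∀ z ∈ Ω,
    hilbertDist Ω a z + hilbertDist Ω z b = hilbertDist Ω a b → z ∈ segment ℝ a b

/-- A face of a closed convex set `C`: a convex subset `F ⊆ C` such that whenever an open
segment between two points of `C` meets `F`, the whole closed segment lies in `F`. -/
def IsFace {n : ℕ} (C F : Set (Euc n)) : Prop :=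
  Convex ℝ F ∧ IsExtreme ℝ C F

/-- A face of `C` which is neither empty nor all of `C`. -/
def IsProperFace {n : ℕ} (C F : Set (Euc n)) : Prop :=
  IsFace C F ∧ F.Nonempty ∧ F ≠ C

/-- `Ω` is a cone with vertex `v` and base `B`: `B` is an `(n−1)`-dimensional convex
domain lying in a hyperplane not containing `v`, and `Ω` is the union of the open
segments from `v` to the points of `B`. -/
def IsConeWith {n : ℕ} (Ω : Set (Euc n)) (v : Euc n) (B : Set (Euc n)) : Prop :=
  ∃ (f : Euc n →ₗ[ℝ] ℝ) (c : ℝ), f ≠ 0 ∧ (∀ b ∈ B, f b = c) ∧ f v ≠ c ∧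
    B.Nonempty ∧ Convex ℝ B ∧ Bornology.IsBounded B ∧
    B = intrinsicInterior ℝ B ∧
    (affineSpan ℝ B : Set (Euc n)) = {x | f x = c} ∧
    Ω = ⋃ b ∈ B, openSegment ℝ v b

/-- `Ω` is a cone. -/
def IsCone {n : ℕ} (Ω : Set (Euc n)) : Prop :=
  ∃ v B, IsConeWith Ω v B

/-! ### Chords -/

/-- `(a, b)` is the parameter interval of the chord cut out by `Ω` on the line
`t ↦ p + t • d`: the line is in `Ω` exactly for `a < t < b`, and in the closure of `Ω`
exactly for `a ≤ t ≤ b`. -/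
def IsChord {n : ℕ} (Ω : Set (Euc n)) (p d : Euc n) (a b : ℝ) : Prop :=
  (∀ t : ℝ, p + t • d ∈ Ω ↔ a < t ∧ t < b) ∧
    (∀ t : ℝ, p + t • d ∈ closure Ω ↔ a ≤ t ∧ t ≤ b)

lemma exists_chord {n : ℕ} {Ω : Set (Euc n)} (hop : IsOpen Ω)
    (hbd : Bornology.IsBounded Ω) (hcv : Convex ℝ Ω) {p d : Euc n} (hp : p ∈ Ω)
    (hd : d ≠ 0) : ∃ a b : ℝ, a < 0 ∧ 0 < b ∧ IsChord Ω p d a b := by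
  have hdn : 0 < ‖d‖ := norm_pos_iff.mpr hd
  set f : ℝ → Euc n := fun t => p + t • d with hf
  have hfc : Continuous f := by fun_prop
  have hlin : ∀ s t u v : ℝ, u + v = 1 → f (u * s + v * t) = u • f s + v • f t := by
    intro s t u v h
    have hv : v = 1 - u := by linarith
    subst hv
    simp only [hf]; module
  set S : Set ℝ := f ⁻¹' (closure Ω) with hS
  have hScl : IsClosed S := isClosed_closure.preimage hfc
  have h0 : (0 : ℝ) ∈ S := by simpa [hS, hf] using subset_closure hp
  have hSb : Bornology.IsBounded S := by
    obtain ⟨R, hR⟩ := hbd.closure.subset_closedBall p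
    refine (Metric.isBounded_iff_subset_closedBall 0).mpr ⟨R / ‖d‖, fun t ht => ?_⟩
    have := hR ht
    simp only [hf, Metric.mem_closedBall, dist_eq_norm, add_sub_cancel_left, norm_smul] at this
    simpa [le_div_iff₀ hdn] using this
  have hScp : IsCompact S := Metric.isCompact_of_isClosed_isBounded hScl hSb
  set a := sInf S
  set b := sSup S
  have haS : a ∈ S := hScp.sInf_mem ⟨0, h0⟩
  have hbS : b ∈ S := hScp.sSup_mem ⟨0, h0⟩
  have hle : ∀ t ∈ S, a ≤ t ∧ t ≤ b := fun t ht =>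
    ⟨csInf_le hScp.bddBelow ht, le_csSup hScp.bddAbove ht⟩
  have hop' : IsOpen (f ⁻¹' Ω) := hop.preimage hfc
  -- a parameter in the open set `f ⁻¹' Ω` is never extremal
  have hlt : ∀ t, f t ∈ Ω → a < t ∧ t < b := by
    intro t ht
    obtain ⟨ε, hε, hball⟩ := Metric.isOpen_iff.mp hop' t ht
    have h1 : t + ε / 2 ∈ S := subset_closure (hball (by
      simp [abs_of_pos hε]; linarith))
    have h2 : t - ε / 2 ∈ S := subset_closure (hball (by
      simp [abs_of_pos hε]; linarith))
    have := hle _ h1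
    have := hle _ h2
    constructor <;> linarith
  have h0ab : a < 0 ∧ 0 < b := hlt 0 (by simpa [hf] using hp)
  have hseg : ∀ c ∈ S, ∀ u : ℝ, 0 ≤ u → u < 1 → f (u * c) ∈ Ω := by
    intro c hc u hu hu1
    have hp' : f 0 ∈ interior Ω := by rw [hop.interior_eq]; simpa [hf] using hp
    have := hcv.combo_interior_closure_mem_interior hp' hc (by linarith : 0 < 1 - u) hu
      (by ring)
    rw [← hlin _ _ _ _ (by ring), hop.interior_eq] at this
    simpa using this
  refine ⟨a, b, h0ab.1, h0ab.2, fun t => ⟨hlt t, fun ⟨h1, h2⟩ => ?_⟩,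
    fun t => ⟨hle t, fun ⟨h1, h2⟩ => ?_⟩⟩
  · rcases le_total 0 t with h | h
    · have := hseg b hbS (t / b) (div_nonneg h h0ab.2.le) ((div_lt_one h0ab.2).mpr h2)
      rwa [div_mul_cancel₀ _ h0ab.2.ne'] at this
    · have := hseg a haS (t / a) (div_nonneg_of_nonpos h h0ab.1.le)
        ((div_lt_one_of_neg h0ab.1).mpr h1)
      rwa [div_mul_cancel₀ _ h0ab.1.ne] at this
  · rcases eq_or_lt_of_le h1 with h | h
    · exact h ▸ haS
    rcases eq_or_lt_of_le h2 with h' | h'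
    · exact h' ▸ hbS
    rcases le_total 0 t with h3 | h3
    · have := hseg b hbS (t / b) (div_nonneg h3 h0ab.2.le) ((div_lt_one h0ab.2).mpr h')
      rw [div_mul_cancel₀ _ h0ab.2.ne'] at this
      exact subset_closure this
    · have := hseg a haS (t / a) (div_nonneg_of_nonpos h3 h0ab.1.le)
        ((div_lt_one_of_neg h0ab.1).mpr h)
      rw [div_mul_cancel₀ _ h0ab.1.ne] at this
      exact subset_closure this

lemma IsChord.frontier_iff {n : ℕ} {Ω : Set (Euc n)} (hop : IsOpen Ω) {p d : Euc n} {a b : ℝ}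
    (h : IsChord Ω p d a b) (hab : a < b) (t : ℝ) :
    p + t • d ∈ frontier Ω ↔ t = a ∨ t = b := by
  rw [frontier, Set.mem_sdiff, hop.interior_eq, h.1, h.2]
  grind

/-- Logarithmic coordinate on a chord; the Hilbert distance of two points of the chord is
the difference of their coordinates. -/
def chordCoord (a b t : ℝ) : ℝ := Real.log (t - a) - Real.log (b - t)

lemma chordCoord_lt {a b s t : ℝ} (has : a < s) (hst : s < t) (htb : t < b) :
    chordCoord a b s < chordCoord a b t := by
  have h1 := Real.log_lt_log (by linarith : 0 < s - a) (by linarith : s - a < t - a)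
  have h2 := Real.log_lt_log (by linarith : 0 < b - t) (by linarith : b - t < b - s)
  unfold chordCoord; linarith

/-- On a chord the boundary points `α, β` of the definition are the ends of the chord, and
the logarithm of the cross ratio is a difference of chord coordinates. -/
lemma hilbertDist_chord {n : ℕ} {Ω : Set (Euc n)} (hop : IsOpen Ω) {p d : Euc n} (hd : d ≠ 0)
    {a b : ℝ} (h : IsChord Ω p d a b) {s t : ℝ} (has : a < s) (hst : s < t) (htb : t < b) :
    hilbertDist Ω (p + s • d) (p + t • d) = chordCoord a b t - chordCoord a b s := by
  have hdn : 0 < ‖d‖ := norm_pos_iff.mpr hd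
  have hab : a < b := by linarith
  have hdist : ∀ u v : ℝ, dist (p + u • d) (p + v • d) = |u - v| * ‖d‖ := by
    intro u v
    rw [dist_add_left, dist_eq_norm, ← sub_smul, norm_smul, Real.norm_eq_abs]
  have hne : p + s • d ≠ p + t • d := by
    rw [← dist_pos, hdist]
    exact mul_pos (abs_pos.mpr (by linarith)) hdn
  have hline : ∀ α, Collinear ℝ ({α, p + s • d, p + t • d} : Set (Euc n)) →
      ∃ u : ℝ, α = p + u • d := by
    intro α hα
    have := hα.mem_affineSpan_of_mem_of_ne (p₁ := p + s • d) (p₂ := p + t • d) (p₃ := α)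
      (by simp) (by simp) (by simp) hne
    obtain ⟨u, hu⟩ := mem_affineSpan_pair_iff_exists_lineMap_eq.mp this
    refine ⟨s + u * (t - s), ?_⟩
    rw [← hu, AffineMap.lineMap_apply_module]
    module
  have hcol : ∀ u : ℝ, Collinear ℝ ({p + u • d, p + s • d, p + t • d} : Set (Euc n)) := by
    intro u
    rw [collinear_iff_exists_forall_eq_smul_vadd]
    refine ⟨p, d, fun q hq => ?_⟩
    simp only [Set.mem_insert_iff, Set.mem_singleton_iff] at hq
    rcases hq with rfl | rfl | rfl
    · exact ⟨u, by simp [add_comm]⟩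
    · exact ⟨s, by simp [add_comm]⟩
    · exact ⟨t, by simp [add_comm]⟩
  have hex : ∃ q : Euc n × Euc n, IsHilbertPair Ω (p + s • d) (p + t • d) q.1 q.2 := by
    refine ⟨(p + a • d, p + b • d), (h.frontier_iff hop hab a).mpr (Or.inl rfl),
      (h.frontier_iff hop hab b).mpr (Or.inr rfl), hcol a, hcol b, ?_, ?_⟩
    · rw [hdist, hdist]
      refine mul_lt_mul_of_pos_right ?_ hdn
      rw [abs_of_neg, abs_of_neg] <;> linarith
    · rw [hdist, hdist]
      refine mul_lt_mul_of_pos_right ?_ hdn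
      rw [abs_of_pos, abs_of_pos] <;> linarith
  -- the labelling condition decides which end of the chord each boundary point is
  have huniq : ∀ q : Euc n × Euc n, IsHilbertPair Ω (p + s • d) (p + t • d) q.1 q.2 →
      q.1 = p + a • d ∧ q.2 = p + b • d := by
    rintro ⟨α, β⟩ ⟨hα, hβ, hcα, hcβ, hdα, hdβ⟩
    obtain ⟨u, rfl⟩ := hline α hcα
    obtain ⟨v, rfl⟩ := hline β hcβ
    simp only [hdist] at hdα hdβ
    have hdα := lt_of_mul_lt_mul_right hdα hdn.le
    have hdβ := lt_of_mul_lt_mul_right hdβ hdn.le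
    constructor
    · rcases (h.frontier_iff hop hab u).mp hα with rfl | rfl
      · rfl
      · rw [abs_of_pos, abs_of_pos] at hdα <;> linarith
    · rcases (h.frontier_iff hop hab v).mp hβ with rfl | rfl
      · rw [abs_of_neg, abs_of_neg] at hdβ <;> linarith
      · rfl
  rw [hilbertDist, dif_pos hex]
  obtain ⟨e1, e2⟩ := huniq _ hex.choose_spec
  rw [e1, e2, hdist, hdist, hdist, hdist, abs_of_neg (by linarith : a - t < 0),
    abs_of_neg (by linarith : a - s < 0), abs_of_pos (by linarith : 0 < b - s),
    abs_of_pos (by linarith : 0 < b - t), mul_div_mul_right _ _ hdn.ne',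
    mul_div_mul_right _ _ hdn.ne', neg_sub, neg_sub,
    Real.log_mul (div_pos (by linarith) (by linarith)).ne'
      (div_pos (by linarith) (by linarith)).ne',
    Real.log_div (by linarith) (by linarith), Real.log_div (by linarith) (by linarith)]
  unfold chordCoord
  ring

lemma hilbertDist_self {n : ℕ} (Ω : Set (Euc n)) (x : Euc n) : hilbertDist Ω x x = 0 := by
  rw [hilbertDist, dif_neg]
  rintro ⟨q, -, -, -, -, h, -⟩
  exact lt_irrefl _ h

/-- The chord through two distinct points of `Ω`, with `x` at parameter `0` and `y` at
parameter `1`, together with the Hilbert distances along it. -/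
lemma exists_chord_pair {n : ℕ} {Ω : Set (Euc n)} (hop : IsOpen Ω)
    (hbd : Bornology.IsBounded Ω) (hcv : Convex ℝ Ω) {x y : Euc n} (hx : x ∈ Ω) (hy : y ∈ Ω)
    (hxy : x ≠ y) : ∃ a b : ℝ, a < 0 ∧ 1 < b ∧ IsChord Ω x (y - x) a b ∧
      ∀ s t : ℝ, a < s → s ≤ t → t < b →
        hilbertDist Ω (x + s • (y - x)) (x + t • (y - x)) =
          chordCoord a b t - chordCoord a b s := by
  have hd : y - x ≠ 0 := sub_ne_zero.mpr hxy.symm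
  obtain ⟨a, b, ha, hb, hch⟩ := exists_chord hop hbd hcv hx hd
  have h1 : (1 : ℝ) < b := ((hch.1 1).mp (by simpa using hy)).2
  refine ⟨a, b, ha, h1, hch, fun s t h2 h3 h4 => ?_⟩
  rcases eq_or_lt_of_le h3 with rfl | h3
  · rw [hilbertDist_self, sub_self]
  · exact hilbertDist_chord hop hd hch h2 h3 h4

/-! ### The Hilbert distance -/

lemma hilbertDist_pos {n : ℕ} {Ω : Set (Euc n)} (hop : IsOpen Ω)
    (hbd : Bornology.IsBounded Ω) (hcv : Convex ℝ Ω) {x y : Euc n} (hx : x ∈ Ω) (hy : y ∈ Ω)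
    (hxy : x ≠ y) : 0 < hilbertDist Ω x y := by
  obtain ⟨a, b, ha, hb, -, hD⟩ := exists_chord_pair hop hbd hcv hx hy hxy
  have h := hD 0 1 ha zero_le_one hb
  simp only [zero_smul, add_zero, one_smul, add_sub_cancel] at h
  rw [h]
  linarith [chordCoord_lt ha one_pos hb]

lemma hilbertDist_nonneg {n : ℕ} {Ω : Set (Euc n)} (hop : IsOpen Ω)
    (hbd : Bornology.IsBounded Ω) (hcv : Convex ℝ Ω) {x y : Euc n} (hx : x ∈ Ω) (hy : y ∈ Ω) :
    0 ≤ hilbertDist Ω x y := by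
  by_cases hxy : x = y
  · rw [hxy, hilbertDist_self]
  · exact (hilbertDist_pos hop hbd hcv hx hy hxy).le

/-- Straight segments are geodesics of the Hilbert metric. -/
lemma hilbertDist_add_of_mem_segment {n : ℕ} {Ω : Set (Euc n)} (hop : IsOpen Ω)
    (hbd : Bornology.IsBounded Ω) (hcv : Convex ℝ Ω) {x y z : Euc n} (hx : x ∈ Ω) (hy : y ∈ Ω)
    (hz : z ∈ segment ℝ x y) :
    hilbertDist Ω x z + hilbertDist Ω z y = hilbertDist Ω x y := by
  by_cases hxy : x = y
  · subst hxy
    rw [segment_same, Set.mem_singleton_iff] at hz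
    subst hz
    simp [hilbertDist_self]
  obtain ⟨a, b, ha, hb, -, hD⟩ := exists_chord_pair hop hbd hcv hx hy hxy
  rw [segment_eq_image'] at hz
  obtain ⟨t, ⟨ht0, ht1⟩, rfl⟩ := hz
  have h1 := hD 0 t ha ht0 (by linarith)
  have h2 := hD t 1 (by linarith) ht1 hb
  have h3 := hD 0 1 ha zero_le_one hb
  simp only [zero_smul, add_zero, one_smul, add_sub_cancel] at h1 h2 h3
  rw [h1, h2, h3]
  ring

lemma exists_mem_segment_hilbertDist_eq {n : ℕ} {Ω : Set (Euc n)} (hop : IsOpen Ω)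
    (hbd : Bornology.IsBounded Ω) (hcv : Convex ℝ Ω) {x y : Euc n} (hx : x ∈ Ω) (hy : y ∈ Ω)
    {c : ℝ} (hc0 : 0 ≤ c) (hc : c ≤ hilbertDist Ω x y) :
    ∃ z ∈ segment ℝ x y, hilbertDist Ω x z = c := by
  by_cases hxy : x = y
  · subst hxy
    rw [hilbertDist_self] at hc
    exact ⟨x, left_mem_segment ℝ x x, by rw [hilbertDist_self]; linarith⟩
  obtain ⟨a, b, ha, hb, -, hD⟩ := exists_chord_pair hop hbd hcv hx hy hxy
  have h3 := hD 0 1 ha zero_le_one hb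
  simp only [zero_smul, add_zero, one_smul, add_sub_cancel] at h3
  have hcont : ContinuousOn (fun t => chordCoord a b t - chordCoord a b 0) (Icc 0 1) := by
    unfold chordCoord
    refine ContinuousOn.sub (ContinuousOn.sub ?_ ?_) continuousOn_const
    · exact ContinuousOn.log (by fun_prop) fun t ht => by linarith [ht.1]
    · exact ContinuousOn.log (by fun_prop) fun t ht => by linarith [ht.2]
  obtain ⟨t, ht, htc⟩ := intermediate_value_Icc zero_le_one hcont
    (show c ∈ Icc _ _ from ⟨by simpa using hc0, by simpa [← h3] using hc⟩)
  refine ⟨x + t • (y - x), by rw [segment_eq_image']; exact ⟨t, ht, rfl⟩, ?_⟩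
  have h1 := hD 0 t ha ht.1 (by linarith [ht.2])
  simp only [zero_smul, add_zero] at h1
  rw [h1]
  exact htc

/-- If both prolongations of `[x, y]` by the factor `ε` stay in the closure of the domain,
then `x` and `y` are close in the Hilbert metric. -/
lemma hilbertDist_le {n : ℕ} {Ω : Set (Euc n)} (hop : IsOpen Ω)
    (hbd : Bornology.IsBounded Ω) (hcv : Convex ℝ Ω) {x y : Euc n} (hx : x ∈ Ω) (hy : y ∈ Ω)
    {ε : ℝ} (hε : 0 < ε) (h1 : y + ε • (y - x) ∈ closure Ω) (h2 : x + ε • (x - y) ∈ closure Ω) :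
    hilbertDist Ω x y ≤ 2 * Real.log (1 + 1 / ε) := by
  have hlog : 0 ≤ Real.log (1 + 1 / ε) := Real.log_nonneg (by
    have : 0 < 1 / ε := by positivity
    linarith)
  by_cases hxy : x = y
  · rw [hxy, hilbertDist_self]; linarith
  obtain ⟨a, b, ha, hb, hch, hD⟩ := exists_chord_pair hop hbd hcv hx hy hxy
  have h3 := hD 0 1 ha zero_le_one hb
  simp only [zero_smul, add_zero, one_smul, add_sub_cancel] at h3
  have hb' : 1 + ε ≤ b := ((hch.2 (1 + ε)).mp (by
    convert h1 using 1; module)).2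
  have ha' : a ≤ -ε := ((hch.2 (-ε)).mp (by
    convert h2 using 1; module)).1
  have key : ∀ u : ℝ, ε ≤ u → Real.log (1 + u) - Real.log u ≤ Real.log (1 + 1 / ε) := by
    intro u hu
    have hu0 : 0 < u := by linarith
    rw [← Real.log_div (by linarith) hu0.ne']
    refine Real.log_le_log (by positivity) ?_
    have := one_div_le_one_div_of_le hε hu
    rw [add_div, div_self hu0.ne']
    linarith
  have k1 := key (b - 1) (by linarith)
  have k2 := key (-a) (by linarith)
  rw [h3]
  unfold chordCoord
  rw [show 1 + (b - 1) = b - 0 by ring] at k1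
  rw [show (0 : ℝ) - a = -a by ring, show 1 - a = 1 + -a by ring]
  linarith

/-- Points at Hilbert distance at most `C` have prolongations by the factor `exp (-C)` in
the closure of the domain; a converse of `hilbertDist_le`. -/
lemma prolong_mem_closure {n : ℕ} {Ω : Set (Euc n)} (hop : IsOpen Ω)
    (hbd : Bornology.IsBounded Ω) (hcv : Convex ℝ Ω) {x y : Euc n} (hx : x ∈ Ω) (hy : y ∈ Ω)
    {C : ℝ} (hC : hilbertDist Ω x y ≤ C) :
    y + Real.exp (-C) • (y - x) ∈ closure Ω ∧ x + Real.exp (-C) • (x - y) ∈ closure Ω := by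
  by_cases hxy : x = y
  · subst hxy
    simpa using subset_closure hx
  obtain ⟨a, b, ha, hb, hch, hD⟩ := exists_chord_pair hop hbd hcv hx hy hxy
  have h3 := hD 0 1 ha zero_le_one hb
  simp only [zero_smul, add_zero, one_smul, add_sub_cancel] at h3
  rw [h3] at hC
  unfold chordCoord at hC
  have key : ∀ u : ℝ, 0 < u → Real.log (1 + u) - Real.log u ≤ C → Real.exp (-C) ≤ u := by
    intro u hu h
    have h1 : Real.log 1 ≤ Real.log (1 + u) := Real.log_le_log one_pos (by linarith)
    rw [Real.log_one] at h1
    rw [← Real.le_log_iff_exp_le hu]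
    linarith
  have e1 : Real.log (1 - a) ≥ Real.log (0 - a) := Real.log_le_log (by linarith) (by linarith)
  have e2 : Real.log (b - 0) ≥ Real.log (b - 1) := Real.log_le_log (by linarith) (by linarith)
  have k1 := key (b - 1) (by linarith) (by
    rw [show 1 + (b - 1) = b - 0 by ring]; linarith)
  have k2 := key (0 - a) (by linarith) (by
    rw [show 1 + (0 - a) = 1 - a by ring]; linarith)
  have hpos := Real.exp_pos (-C)
  constructor
  · convert (hch.2 (1 + Real.exp (-C))).mpr ⟨by linarith, by linarith⟩ using 1
    module
  · convert (hch.2 (-Real.exp (-C))).mpr ⟨by linarith, by linarith⟩ using 1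
    module

/-- A bound on Hilbert distances survives, in the form of `prolong_mem_closure`, for limits
on the boundary. -/
lemma prolong_mem_closure_of_tendsto {n : ℕ} {Ω : Set (Euc n)} (hop : IsOpen Ω)
    (hbd : Bornology.IsBounded Ω) (hcv : Convex ℝ Ω) {x y : ℕ → Euc n} (hx : ∀ k, x k ∈ Ω)
    (hy : ∀ k, y k ∈ Ω) {C : ℝ} (hC : ∀ k, hilbertDist Ω (x k) (y k) ≤ C) {a b : Euc n}
    (hxa : Filter.Tendsto x Filter.atTop (nhds a))
    (hyb : Filter.Tendsto y Filter.atTop (nhds b)) :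
    b + Real.exp (-C) • (b - a) ∈ closure Ω ∧ a + Real.exp (-C) • (a - b) ∈ closure Ω := by
  have h := fun k => prolong_mem_closure hop hbd hcv (hx k) (hy k) (hC k)
  constructor
  · exact isClosed_closure.mem_of_tendsto (hyb.add ((hyb.sub hxa).const_smul _))
      (Filter.Eventually.of_forall fun k => (h k).1)
  · exact isClosed_closure.mem_of_tendsto (hxa.add ((hxa.sub hyb).const_smul _))
      (Filter.Eventually.of_forall fun k => (h k).2)

lemma notMem_of_mem_frontier {n : ℕ} {Ω : Set (Euc n)} (hop : IsOpen Ω) {a : Euc n}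
    (ha : a ∈ frontier Ω) : a ∉ Ω := by
  rw [hop.frontier_eq] at ha
  exact ha.2

/-- A segment from a point of `Ω` cannot be prolonged beyond a boundary point. -/
lemma prolong_notMem_closure {n : ℕ} {Ω : Set (Euc n)} (hop : IsOpen Ω) (hcv : Convex ℝ Ω)
    {p a : Euc n} (hp : p ∈ Ω) (ha : a ∈ frontier Ω) {ε : ℝ} (hε : 0 < ε) :
    a + ε • (a - p) ∉ closure Ω := by
  intro h
  apply notMem_of_mem_frontier hop ha
  rw [← hop.interior_eq] at hp ⊢
  have h1 : (0 : ℝ) < 1 + ε := by linarith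
  have := hcv.combo_interior_closure_mem_interior hp h
    (a := ε / (1 + ε)) (b := 1 / (1 + ε)) (by positivity) (by positivity)
    (by field_simp; ring)
  convert this using 1
  have e1 : a = (ε / (1 + ε) + 1 / (1 + ε)) • a := by
    rw [← add_div, add_comm ε 1, div_self h1.ne', one_smul]
  have e2 : ε / (1 + ε) = 1 / (1 + ε) * ε := by ring
  nth_rewrite 1 [e1]
  rw [e2]
  module

/-! ### Faces and relative interiors -/

lemma mem_intrinsicInterior_iff_nhdsWithin {n : ℕ} {F : Set (Euc n)} {z : Euc n} :
    z ∈ intrinsicInterior ℝ F ↔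
      z ∈ affineSpan ℝ F ∧ F ∈ nhdsWithin z (affineSpan ℝ F : Set (Euc n)) := by
  rw [mem_intrinsicInterior]
  constructor
  · rintro ⟨z', hz', rfl⟩
    exact ⟨z'.2, preimage_coe_mem_nhds_subtype.mp (mem_interior_iff_mem_nhds.mp hz')⟩
  · rintro ⟨h1, h2⟩
    exact ⟨⟨z, h1⟩, mem_interior_iff_mem_nhds.mpr (preimage_coe_mem_nhds_subtype.mpr h2), rfl⟩

lemma exists_prolong_mem_of_mem_intrinsicInterior {n : ℕ} {F : Set (Euc n)} {a b : Euc n}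
    (ha : a ∈ F) (hb : b ∈ intrinsicInterior ℝ F) :
    ∃ ε : ℝ, 0 < ε ∧ b + ε • (b - a) ∈ F := by
  obtain ⟨hbs, hbF⟩ := mem_intrinsicInterior_iff_nhdsWithin.mp hb
  have hspan : ∀ ε : ℝ, b + ε • (b - a) ∈ affineSpan ℝ F := fun ε => by
    have := AffineMap.lineMap_mem (Q := affineSpan ℝ F) (-ε) hbs (subset_affineSpan ℝ F ha)
    convert this using 1
    rw [AffineMap.lineMap_apply_module]
    module
  have hc : Filter.Tendsto (fun ε : ℝ => b + ε • (b - a)) (nhds 0)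
      (nhdsWithin b (affineSpan ℝ F : Set (Euc n))) := by
    refine tendsto_nhdsWithin_iff.mpr ⟨?_, Filter.Eventually.of_forall hspan⟩
    have : Continuous fun ε : ℝ => b + ε • (b - a) := by fun_prop
    simpa using this.tendsto 0
  obtain ⟨ε, hε, h⟩ := (((hc.eventually hbF).filter_mono nhdsWithin_le_nhds).and
    (self_mem_nhdsWithin : Ioi (0 : ℝ) ∈ nhdsWithin 0 (Ioi 0))).exists
  exact ⟨ε, h, hε⟩

/-- The relative interior of a convex set is reached by moving from any point of the set
towards a relatively interior point. -/
lemma combo_mem_intrinsicInterior {n : ℕ} {F : Set (Euc n)} (hF : Convex ℝ F) {w z : Euc n}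
    (hw : w ∈ F) (hz : z ∈ intrinsicInterior ℝ F) {c : ℝ} (hc0 : 0 < c) (hc1 : c ≤ 1) :
    w + c • (z - w) ∈ intrinsicInterior ℝ F := by
  obtain ⟨hzs, hzF⟩ := mem_intrinsicInterior_iff_nhdsWithin.mp hz
  have hws := subset_affineSpan ℝ F hw
  have hspan : ∀ q ∈ affineSpan ℝ F, ∀ t : ℝ, w + t • (q - w) ∈ affineSpan ℝ F := by
    intro q hq t
    have := AffineMap.lineMap_mem (Q := affineSpan ℝ F) t hws hq
    convert this using 1
    rw [AffineMap.lineMap_apply_module]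
    module
  refine mem_intrinsicInterior_iff_nhdsWithin.mpr ⟨hspan z hzs c, ?_⟩
  -- the inverse homothety with centre `w` is continuous and carries the point to `z`
  have hg : Filter.Tendsto (fun q => w + c⁻¹ • (q - w))
      (nhdsWithin (w + c • (z - w)) (affineSpan ℝ F : Set (Euc n)))
      (nhdsWithin z (affineSpan ℝ F : Set (Euc n))) := by
    refine tendsto_nhdsWithin_iff.mpr ⟨?_, ?_⟩
    · have : Continuous fun q : Euc n => w + c⁻¹ • (q - w) := by fun_prop
      have := this.tendsto (w + c • (z - w))
      rw [add_sub_cancel_left, smul_smul, inv_mul_cancel₀ hc0.ne', one_smul,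
        add_sub_cancel] at this
      exact this.mono_left nhdsWithin_le_nhds
    · filter_upwards [self_mem_nhdsWithin] with q hq using hspan q hq _
  filter_upwards [hg hzF] with q hq
  have h1 := hF.add_smul_sub_mem hw hq ⟨hc0.le, hc1⟩
  rwa [add_sub_cancel_left, smul_smul, mul_inv_cancel₀ hc0.ne', one_smul,
    add_sub_cancel] at h1

/-- The smallest face of `K` containing `a`: the points `z` of `K` such that the segment
`[z, a]` can be prolonged beyond `a` inside `K`. -/
def faceAt {n : ℕ} (K : Set (Euc n)) (a : Euc n) : Set (Euc n) :=
  {z | z ∈ K ∧ ∃ ε : ℝ, 0 < ε ∧ a + ε • (a - z) ∈ K}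

lemma prolong_mem_of_le {n : ℕ} {K : Set (Euc n)} (hK : Convex ℝ K) {a z : Euc n} (ha : a ∈ K)
    {ε δ : ℝ} (hδ : 0 < δ) (hδε : δ ≤ ε) (h : a + ε • (a - z) ∈ K) :
    a + δ • (a - z) ∈ K := by
  have hε : 0 < ε := by linarith
  have := hK.add_smul_sub_mem ha h (t := δ / ε)
    ⟨by positivity, (div_le_one hε).mpr hδε⟩
  rwa [add_sub_cancel_left, smul_smul, div_mul_cancel₀ _ hε.ne'] at this

lemma isFace_faceAt {n : ℕ} {K : Set (Euc n)} (hK : Convex ℝ K) {a : Euc n} (ha : a ∈ K) :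
    IsFace K (faceAt K a) := by
  refine ⟨?_, ⟨fun z hz => hz.1, ?_⟩⟩
  · rintro x ⟨hx, ε, hε, hxε⟩ y ⟨hy, δ, hδ, hyδ⟩ u v hu hv huv
    refine ⟨hK hx hy hu hv huv, min ε δ, lt_min hε hδ, ?_⟩
    have h1 := prolong_mem_of_le hK ha (lt_min hε hδ) (min_le_left _ _) hxε
    have h2 := prolong_mem_of_le hK ha (lt_min hε hδ) (min_le_right _ _) hyδ
    convert hK h1 h2 hu hv huv using 1
    obtain rfl : v = 1 - u := by linarith
    module
  · rintro x hx y hy z ⟨hz, ε, hε, hw⟩ ⟨u, v, hu, hv, huv, rfl⟩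
    -- `a` is a convex combination of `x`, `y` and the prolongation `w = a + ε (a - z)`,
    -- so the line from `x` through `a` leaves `a` towards a point of `[w, y]`
    have hεv : 0 < 1 + ε * v := by positivity
    refine ⟨hx, ε * u / (1 + ε * v), by positivity, ?_⟩
    have := hK hw hy (a := 1 / (1 + ε * v)) (b := ε * v / (1 + ε * v)) (by positivity)
      (by positivity) (by field_simp)
    convert this using 1
    rw [← sub_eq_zero, ← smul_right_injective (Euc n) hεv.ne' |>.eq_iff]
    obtain rfl : v = 1 - u := by linarith
    simp only [smul_sub, smul_add, smul_smul, smul_zero]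
    have e1 : (1 + ε * (1 - u)) * (ε * u / (1 + ε * (1 - u))) = ε * u := by field_simp
    have e2 : (1 + ε * (1 - u)) * (1 / (1 + ε * (1 - u))) = 1 := by field_simp
    have e3 : (1 + ε * (1 - u)) * (ε * (1 - u) / (1 + ε * (1 - u))) = ε * (1 - u) := by
      field_simp
    simp only [← mul_assoc, e1, e2, e3]
    module

lemma mem_faceAt_self {n : ℕ} {K : Set (Euc n)} {a : Euc n} (ha : a ∈ K) : a ∈ faceAt K a :=
  ⟨ha, 1, one_pos, by simpa using ha⟩

lemma mem_intrinsicInterior_faceAt {n : ℕ} {K : Set (Euc n)} (hK : Convex ℝ K) {a : Euc n}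
    (ha : a ∈ K) : a ∈ intrinsicInterior ℝ (faceAt K a) := by
  have hF := isFace_faceAt hK ha
  obtain ⟨z, hz⟩ := Set.Nonempty.intrinsicInterior hF.1 ⟨a, mem_faceAt_self ha⟩
  obtain ⟨hzK, ε, hε, hw⟩ := intrinsicInterior_subset hz
  have hw' : a + ε • (a - z) ∈ faceAt K a := by
    refine ⟨hw, 1 / ε, by positivity, ?_⟩
    convert hzK using 1
    rw [sub_add_cancel_left, smul_neg, smul_smul, one_div_mul_cancel hε.ne', one_smul]
    abel
  have h1 : 0 < 1 + ε := by linarith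
  have := combo_mem_intrinsicInterior hF.1 hw' hz (c := ε / (1 + ε)) (by positivity)
    (by rw [div_le_one h1]; linarith)
  convert this using 1
  rw [show z - (a + ε • (a - z)) = -((1 + ε) • (a - z)) by module, smul_neg, smul_smul,
    div_mul_cancel₀ _ h1.ne']
  abel

lemma faceAt_subset {n : ℕ} {K : Set (Euc n)} (hK : Convex ℝ K) {a b : Euc n} (ha : a ∈ K)
    (hb : b ∈ faceAt K a) : faceAt K b ⊆ faceAt K a := by
  rintro z ⟨hz, ε, hε, hw⟩
  have h1 : 0 < 1 + ε := by linarith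
  refine (isFace_faceAt hK ha).2.left_mem_of_mem_openSegment hz hw hb
    ⟨ε / (1 + ε), 1 / (1 + ε), by positivity, by positivity, by field_simp; ring, ?_⟩
  rw [← sub_eq_zero, ← smul_right_injective (Euc n) h1.ne' |>.eq_iff]
  have e1 : (1 + ε) * (ε / (1 + ε)) = ε := by field_simp
  have e2 : (1 + ε) * (1 / (1 + ε)) = 1 := by field_simp
  simp only [smul_sub, smul_add, smul_smul, smul_zero, ← mul_assoc, e1, e2]
  module

/-- Two points whose segment can be prolonged inside `K` at both ends are relatively
interior to a common face. -/
lemma exists_common_face {n : ℕ} {K : Set (Euc n)} (hK : Convex ℝ K) {a b : Euc n} (ha : a ∈ K)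
    (hb : b ∈ K) {ε : ℝ} (hε : 0 < ε) (h1 : b + ε • (b - a) ∈ K) (h2 : a + ε • (a - b) ∈ K) :
    ∃ F, IsFace K F ∧ a ∈ intrinsicInterior ℝ F ∧ b ∈ intrinsicInterior ℝ F := by
  have heq : faceAt K a = faceAt K b :=
    (faceAt_subset hK hb ⟨ha, ε, hε, h1⟩).antisymm (faceAt_subset hK ha ⟨hb, ε, hε, h2⟩)
  refine ⟨faceAt K a, isFace_faceAt hK ha, mem_intrinsicInterior_faceAt hK ha, ?_⟩
  rw [heq]
  exact mem_intrinsicInterior_faceAt hK hb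

/-! ### Rays and their images -/

lemma add_smul_mem_segment {n : ℕ} {p d : Euc n} {u v : ℝ} (hu : 0 ≤ u) (huv : u ≤ v) :
    p + u • d ∈ segment ℝ p (p + v • d) := by
  rw [segment_eq_image']
  rcases eq_or_lt_of_le (hu.trans huv) with h | h
  · have : u = 0 := by linarith
    exact ⟨0, by simp, by simp [this]⟩
  · exact ⟨u / v, ⟨by positivity, (div_le_one h).mpr huv⟩, by
      simp [smul_smul, div_mul_cancel₀ _ h.ne']⟩

lemma IsRayIn.subset {n : ℕ} {Ω r : Set (Euc n)} (hr : IsRayIn Ω r) : r ⊆ Ω := by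
  obtain ⟨p, -, d, -, rfl⟩ := hr
  exact Set.inter_subset_right

/-- A ray `r` is the half-open segment from its starting point to `a(r)`. -/
lemma IsRayIn.exists_param {n : ℕ} {Ω : Set (Euc n)} (hop : IsOpen Ω)
    (hbd : Bornology.IsBounded Ω) (hcv : Convex ℝ Ω) {r : Set (Euc n)} (hr : IsRayIn Ω r)
    {a : Euc n} (ha : IsBdryLimit Ω r a) :
    ∃ p ∈ Ω, ∀ x, x ∈ r ↔ ∃ s : ℝ, 0 ≤ s ∧ s < 1 ∧ x = p + s • (a - p) := by
  obtain ⟨p, hp, d, hd, rfl⟩ := hr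
  obtain ⟨haf, hac⟩ := ha
  obtain ⟨c, b, hc, hb, hch⟩ := exists_chord hop hbd hcv hp hd
  have hdd : inner ℝ d d ≠ (0 : ℝ) := inner_self_ne_zero.mpr hd
  -- the parameter along the ray is a continuous function, so the Euclidean ray is closed
  set T : Euc n → ℝ := fun x => inner ℝ d (x - p) / inner ℝ d d with hT
  have hTc : Continuous T := by fun_prop
  have hcl : IsClosed {x : Euc n | 0 ≤ T x ∧ x = p + T x • d} :=
    (isClosed_le continuous_const hTc).inter (isClosed_eq continuous_id (by fun_prop))
  have hsub : {x | ∃ t : ℝ, 0 ≤ t ∧ x = p + t • d} ∩ Ω ⊆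
      {x : Euc n | 0 ≤ T x ∧ x = p + T x • d} := by
    rintro x ⟨⟨t, ht, rfl⟩, -⟩
    have : T (p + t • d) = t := by
      simp only [hT, add_sub_cancel_left, inner_smul_right]
      field_simp
    exact ⟨this.symm ▸ ht, by rw [this]⟩
  obtain ⟨hT0, haT⟩ := closure_minimal hsub hcl hac
  have hab : a = p + b • d := by
    rw [haT] at haf
    rcases (hch.frontier_iff hop (by linarith) (T a)).mp haf with h | h
    · linarith
    · rwa [h] at haT
  refine ⟨p, hp, fun x => ⟨?_, ?_⟩⟩
  · rintro ⟨⟨t, ht, rfl⟩, hx⟩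
    have htb := ((hch.1 t).mp hx).2
    refine ⟨t / b, by positivity, (div_lt_one hb).mpr htb, ?_⟩
    rw [hab, add_sub_cancel_left, smul_smul, div_mul_cancel₀ _ hb.ne']
  · rintro ⟨s, hs0, hs1, rfl⟩
    rw [hab, add_sub_cancel_left, smul_smul]
    exact ⟨⟨s * b, by positivity, rfl⟩, (hch.1 _).mpr ⟨by nlinarith, by nlinarith⟩⟩

/-- An isometry maps a rigid segment into the segment of the images: a point of the image
segment at the right distance has a preimage, which by rigidity is the given point. -/
lemma map_mem_segment_of_rigid {n : ℕ} {Ω Ω' : Set (Euc n)}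
    (hop : IsOpen Ω) (hbd : Bornology.IsBounded Ω) (hcv : Convex ℝ Ω)
    (hop' : IsOpen Ω') (hbd' : Bornology.IsBounded Ω') (hcv' : Convex ℝ Ω')
    {τ : Euc n → Euc n} (hτ : IsHilbertIsometry Ω Ω' τ) {r : Set (Euc n)}
    (hrig : IsRigidSet Ω r) {p y z : Euc n} (hp : p ∈ r) (hz : z ∈ r) (hpΩ : p ∈ Ω) (hzΩ : z ∈ Ω)
    (hy : y ∈ segment ℝ p z) : τ y ∈ segment ℝ (τ p) (τ z) := by
  obtain ⟨hmaps, hsurj, hiso⟩ := hτ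
  have hyΩ : y ∈ Ω := hcv.segment_subset hpΩ hzΩ hy
  have hadd := hilbertDist_add_of_mem_segment hop hbd hcv hpΩ hzΩ hy
  have hyz := hilbertDist_nonneg hop hbd hcv hyΩ hzΩ
  obtain ⟨w', hw', hdw'⟩ := exists_mem_segment_hilbertDist_eq hop' hbd' hcv' (hmaps hpΩ)
    (hmaps hzΩ) (hilbertDist_nonneg hop hbd hcv hpΩ hyΩ)
    (show hilbertDist Ω p y ≤ _ by rw [hiso p hpΩ z hzΩ]; linarith)
  obtain ⟨w, hw, rfl⟩ := hsurj (hcv'.segment_subset (hmaps hpΩ) (hmaps hzΩ) hw')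
  have hadd' := hilbertDist_add_of_mem_segment hop' hbd' hcv' (hmaps hpΩ) (hmaps hzΩ) hw'
  rw [hiso p hpΩ w hw, hiso w hw z hzΩ, hiso p hpΩ z hzΩ] at hadd'
  rw [hiso p hpΩ w hw] at hdw'
  have hwseg := hrig p hp z hz w hw hadd'
  suffices y = w by rw [this]; exact hw'
  rw [segment_eq_image'] at hy hwseg
  obtain ⟨s, ⟨hs0, hs1⟩, rfl⟩ := hy
  obtain ⟨t, ⟨ht0, ht1⟩, rfl⟩ := hwseg
  by_contra hne
  rcases le_total s t with h | h
  · have h1 := hilbertDist_add_of_mem_segment hop hbd hcv hpΩ hw (add_smul_mem_segment hs0 h)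
    have h2 := hilbertDist_pos hop hbd hcv hyΩ hw hne
    simp only at hdw'
    linarith
  · have h1 := hilbertDist_add_of_mem_segment hop hbd hcv hpΩ hyΩ (add_smul_mem_segment ht0 h)
    have h2 := hilbertDist_pos hop hbd hcv hw hyΩ (Ne.symm hne)
    simp only at hdw'
    linarith

/-- The image of a rigid ray accumulates at no more than one boundary point. -/
lemma bdryLimit_image_unique {n : ℕ} {Ω Ω' : Set (Euc n)}
    (hop : IsOpen Ω) (hbd : Bornology.IsBounded Ω) (hcv : Convex ℝ Ω)
    (hop' : IsOpen Ω') (hbd' : Bornology.IsBounded Ω') (hcv' : Convex ℝ Ω')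
    {τ : Euc n → Euc n} (hτ : IsHilbertIsometry Ω Ω' τ) {r : Set (Euc n)}
    (hr : IsRayIn Ω r) (hrig : IsRigidSet Ω r) {a : Euc n} (ha : IsBdryLimit Ω r a)
    {b c : Euc n} (hb : IsBdryLimit Ω' (τ '' r) b) (hc : IsBdryLimit Ω' (τ '' r) c) :
    b = c := by
  have hrΩ : r ⊆ Ω := hr.subset
  obtain ⟨p, hp, hpar⟩ := hr.exists_param hop hbd hcv ha
  have hpr : p ∈ r := (hpar p).mpr ⟨0, le_rfl, one_pos, by simp⟩
  have hcmp : ∀ y ∈ r, ∀ z ∈ r, y ∈ segment ℝ p z ∨ z ∈ segment ℝ p y := by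
    intro y hy z hz
    obtain ⟨s, hs0, -, rfl⟩ := (hpar y).mp hy
    obtain ⟨t, ht0, -, rfl⟩ := (hpar z).mp hz
    rcases le_total s t with h | h
    · exact Or.inl (add_smul_mem_segment hs0 h)
    · exact Or.inr (add_smul_mem_segment ht0 h)
  have hτp := hτ.1 hp
  obtain ⟨v, hv, hvlim⟩ := mem_closure_iff_seq_limit.mp hc.2
  choose z hzr hzv using hv
  -- every point of the image ray lies on the segment from `τ p` to `c`
  have hseg : τ '' r ⊆ {x | dist (τ p) x + dist x c = dist (τ p) c} := by
    rintro _ ⟨y, hy, rfl⟩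
    -- the points `z k` eventually run beyond `y`, since `τ (z k)` tends to the boundary
    have hfreq : ∃ᶠ k in Filter.atTop, τ y ∈ segment ℝ (τ p) (v k) := by
      intro hev
      obtain ⟨N, hN⟩ := Filter.eventually_atTop.mp hev
      have hbound : ∀ k, hilbertDist Ω' (τ p) (v (k + N)) ≤ hilbertDist Ω p y := by
        intro k
        have hzk := hrΩ (hzr (k + N))
        rw [← hzv, hτ.2.2 p hp _ hzk]
        rcases hcmp y hy _ (hzr (k + N)) with h | h
        · refine absurd ?_ (hN (k + N) (by omega))
          show τ y ∈ segment ℝ (τ p) (v (k + N))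
          rw [← hzv]
          exact map_mem_segment_of_rigid hop hbd hcv hop' hbd' hcv' hτ hrig hpr
            (hzr _) hp hzk h
        · have h1 := hilbertDist_add_of_mem_segment hop hbd hcv hp (hrΩ hy) h
          have h2 := hilbertDist_nonneg hop hbd hcv hzk (hrΩ hy)
          linarith
      have hlim := prolong_mem_closure_of_tendsto hop' hbd' hcv' (x := fun _ => τ p)
        (fun _ => hτp) (fun k => by rw [← hzv]; exact hτ.1 (hrΩ (hzr _))) hbound
        tendsto_const_nhds (hvlim.comp (Filter.tendsto_add_atTop_nat N))
      exact prolong_notMem_closure hop' hcv' hτp hc.1 (Real.exp_pos _) hlim.1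
    have hcl : IsClosed {q : Euc n | dist (τ p) (τ y) + dist (τ y) q = dist (τ p) q} :=
      isClosed_eq (by fun_prop) (by fun_prop)
    refine hcl.mem_of_frequently_of_tendsto (hfreq.mono fun k hk => ?_) hvlim
    exact dist_add_dist_eq_iff.mpr (mem_segment_iff_wbtw.mp hk)
  have hcl : IsClosed {x : Euc n | dist (τ p) x + dist x c = dist (τ p) c} :=
    isClosed_eq (by fun_prop) (by fun_prop)
  have hbc : b ∈ segment ℝ (τ p) c :=
    mem_segment_iff_wbtw.mpr (dist_add_dist_eq_iff.mp (closure_minimal hseg hcl hb.2))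
  by_contra hne
  have hbp : b ≠ τ p := fun h => notMem_of_mem_frontier hop' hb.1 (h ▸ hτp)
  refine notMem_of_mem_frontier hop' hb.1 ?_
  have hopen := mem_openSegment_of_ne_left_right hbp.symm (Ne.symm hne) hbc
  have := hcv'.openSegment_interior_closure_subset_interior
    (by rwa [hop'.interior_eq] : τ p ∈ interior Ω') (frontier_subset_closure hc.1) hopen
  rwa [hop'.interior_eq] at this

/-- Rays ending in the relative interior of one face stay at bounded Hilbert distance: a
common prolongation factor for the starting points and for the end points serves all pairs
with the same affine parameter. -/
lemma exists_dist_bound {n : ℕ} {Ω : Set (Euc n)}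
    (hop : IsOpen Ω) (hbd : Bornology.IsBounded Ω) (hcv : Convex ℝ Ω)
    {r₁ r₂ : Set (Euc n)} (hr₁ : IsRayIn Ω r₁) (hr₂ : IsRayIn Ω r₂) {a₁ a₂ : Euc n}
    (ha₁ : IsBdryLimit Ω r₁ a₁) (ha₂ : IsBdryLimit Ω r₂ a₂)
    {F : Set (Euc n)} (hF : IsFace (closure Ω) F)
    (ha₁F : a₁ ∈ intrinsicInterior ℝ F) (ha₂F : a₂ ∈ intrinsicInterior ℝ F) :
    ∃ C : ℝ, ∀ x ∈ r₁, ∃ y ∈ r₂, hilbertDist Ω x y ≤ C := by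
  obtain ⟨p₁, hp₁, hpar₁⟩ := hr₁.exists_param hop hbd hcv ha₁
  obtain ⟨p₂, hp₂, hpar₂⟩ := hr₂.exists_param hop hbd hcv ha₂
  have hK : Convex ℝ (closure Ω) := hcv.closure
  have hΩi : Ω ⊆ intrinsicInterior ℝ Ω := by
    have := interior_subset_intrinsicInterior (𝕜 := ℝ) (s := Ω)
    rwa [hop.interior_eq] at this
  obtain ⟨ε₁, hε₁, h₁⟩ := exists_prolong_mem_of_mem_intrinsicInterior
    (intrinsicInterior_subset ha₁F) ha₂F
  obtain ⟨ε₂, hε₂, h₂⟩ := exists_prolong_mem_of_mem_intrinsicInterior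
    (intrinsicInterior_subset ha₂F) ha₁F
  obtain ⟨ε₃, hε₃, h₃⟩ := exists_prolong_mem_of_mem_intrinsicInterior hp₁ (hΩi hp₂)
  obtain ⟨ε₄, hε₄, h₄⟩ := exists_prolong_mem_of_mem_intrinsicInterior hp₂ (hΩi hp₁)
  set ε := min (min ε₁ ε₂) (min ε₃ ε₄) with hεdef
  have hε : 0 < ε := lt_min (lt_min hε₁ hε₂) (lt_min hε₃ hε₄)
  have k₁ := prolong_mem_of_le hK (hF.2.subset (intrinsicInterior_subset ha₂F)) hε
    ((min_le_left _ _).trans (min_le_left _ _)) (hF.2.subset h₁)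
  have k₂ := prolong_mem_of_le hK (hF.2.subset (intrinsicInterior_subset ha₁F)) hε
    ((min_le_left _ _).trans (min_le_right _ _)) (hF.2.subset h₂)
  have k₃ := prolong_mem_of_le hK (subset_closure hp₂) hε
    ((min_le_right _ _).trans (min_le_left _ _)) (subset_closure h₃)
  have k₄ := prolong_mem_of_le hK (subset_closure hp₁) hε
    ((min_le_right _ _).trans (min_le_right _ _)) (subset_closure h₄)
  refine ⟨2 * Real.log (1 + 1 / ε), fun x hx => ?_⟩
  have hr₁Ω : r₁ ⊆ Ω := hr₁.subset
  have hr₂Ω : r₂ ⊆ Ω := hr₂.subset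
  obtain ⟨s, hs0, hs1, hxs⟩ := (hpar₁ x).mp hx
  have hy : p₂ + s • (a₂ - p₂) ∈ r₂ := (hpar₂ _).mpr ⟨s, hs0, hs1, rfl⟩
  refine ⟨p₂ + s • (a₂ - p₂), hy, hilbertDist_le hop hbd hcv (hr₁Ω hx) (hr₂Ω hy) hε ?_ ?_⟩
  · convert hK k₃ k₁ (by linarith : 0 ≤ 1 - s) hs0 (by ring) using 1
    rw [hxs]; module
  · convert hK k₄ k₂ (by linarith : 0 ≤ 1 - s) hs0 (by ring) using 1
    rw [hxs]; module

/-- Let `τ : Ω → Ω'` be an isometry of Hilbert geometries and let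
`r₁, r₂` be rigid rays in `Ω` whose boundary accumulation points `a(r₁), a(r₂)` lie in
the relative interior of the same face of the closure of `Ω`. Then `a(τ(r₁))` and
`a(τ(r₂))` lie in the relative interior of the same face of the closure of `Ω'`. -/
theorem stmt_11 {n : ℕ} (Ω Ω' : Set (Euc n))
    (hne : Ω.Nonempty) (hop : IsOpen Ω) (hbd : Bornology.IsBounded Ω) (hcv : Convex ℝ Ω)
    (hne' : Ω'.Nonempty) (hop' : IsOpen Ω') (hbd' : Bornology.IsBounded Ω')
    (hcv' : Convex ℝ Ω') (τ : Euc n → Euc n) (hτ : IsHilbertIsometry Ω Ω' τ)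
    (r₁ r₂ : Set (Euc n)) (hr₁ : IsRayIn Ω r₁) (hr₂ : IsRayIn Ω r₂)
    (hrig₁ : IsRigidSet Ω r₁) (hrig₂ : IsRigidSet Ω r₂)
    (a₁ a₂ : Euc n) (ha₁ : IsBdryLimit Ω r₁ a₁) (ha₂ : IsBdryLimit Ω r₂ a₂)
    (F : Set (Euc n)) (hF : IsFace (closure Ω) F)
    (ha₁F : a₁ ∈ intrinsicInterior ℝ F) (ha₂F : a₂ ∈ intrinsicInterior ℝ F) :
    ∀ a₁' a₂' : Euc n, IsBdryLimit Ω' (τ '' r₁) a₁' → IsBdryLimit Ω' (τ '' r₂) a₂' →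
      ∃ F' : Set (Euc n), IsFace (closure Ω') F' ∧
        a₁' ∈ intrinsicInterior ℝ F' ∧ a₂' ∈ intrinsicInterior ℝ F' := by
  intro a₁' a₂' ha₁' ha₂'
  have hr₁Ω : r₁ ⊆ Ω := hr₁.subset
  have hr₂Ω : r₂ ⊆ Ω := hr₂.subset
  obtain ⟨C, hC⟩ := exists_dist_bound hop hbd hcv hr₁ hr₂ ha₁ ha₂ hF ha₁F ha₂F
  obtain ⟨u, hu, hulim⟩ := mem_closure_iff_seq_limit.mp ha₁'.2
  choose x hxr hxu using hu
  choose y hyr hxy using fun k => hC (x k) (hxr k)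
  have hyΩ : ∀ k, τ (y k) ∈ Ω' := fun k => hτ.1 (hr₂Ω (hyr k))
  obtain ⟨b, hbcl, φ, hφ, hlim⟩ := tendsto_subseq_of_bounded hbd' hyΩ
  obtain ⟨h1, h2⟩ := prolong_mem_closure_of_tendsto hop' hbd' hcv'
    (x := u ∘ φ) (y := (fun k => τ (y k)) ∘ φ) (C := C)
    (fun k => by simp only [Function.comp, ← hxu]; exact hτ.1 (hr₁Ω (hxr _)))
    (fun k => hyΩ _)
    (fun k => by
      simp only [Function.comp, ← hxu]
      rw [hτ.2.2 _ (hr₁Ω (hxr _)) _ (hr₂Ω (hyr _))]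
      exact hxy _)
    (hulim.comp hφ.tendsto_atTop) hlim
  -- were `b` interior, the prolongation of `[b, a₁']` would make `a₁'` interior as well
  have hbfr : b ∈ frontier Ω' := by
    rw [hop'.frontier_eq]
    exact ⟨hbcl, fun hb => prolong_notMem_closure hop' hcv' hb ha₁'.1 (Real.exp_pos _) h2⟩
  have hbr : b ∈ closure (τ '' r₂) :=
    mem_closure_of_tendsto hlim (Filter.Eventually.of_forall fun k => ⟨_, hyr _, rfl⟩)
  obtain rfl : b = a₂' := bdryLimit_image_unique hop hbd hcv hop' hbd' hcv' hτ hr₂ hrig₂ ha₂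
    ⟨hbfr, hbr⟩ ha₂'
  exact exists_common_face hcv'.closure (frontier_subset_closure ha₁'.1) hbcl
    (Real.exp_pos _) h1 h2
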